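/- arXiv:0905.2557 — 2 statements merged into one kernel-verified Lean document; each statement's English description precedes it below -/
import Mathlib

section
/- For all integers i and r with 1 ≤ r ≤ i + 2n − 2, one has h_i^{(r)}(x_1,…,x_n) − x_1·h_i^{(r−1)}(x_1,…,x_n) = h_{i+1}^{(r−1)}(x_2,…,x_n), where the right-hand side is the analogous quantity built from the n−1 variables x_2,…,x_n (so its recursion uses the coefficients a(i+n−2), b(i+n−2)). -/
open Polynomial Matrix Finset

noncomputable section

variable {K L : Type*} [Field K] [Field L]

/-- The orthogonal-polynomial sequence: `φ₀ = 1`, `φ₁ = z - a 0`,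
`φ_{i+1} = (z - a i)·φ_i - b i·φ_{i-1}` (so `φ_{-1} = 0`). -/
def phi (a b : ℤ → K) : ℕ → Polynomial K
  | 0 => 1
  | 1 => Polynomial.X - Polynomial.C (a 0)
  | (i+2) => (Polynomial.X - Polynomial.C (a (i+1))) * phi a b (i+1)
      - Polynomial.C (b (i+1)) * phi a b i

/-- `φ` with integer index, `0` for negative index. -/
def phiZ (a b : ℤ → K) (m : ℤ) : Polynomial K :=
  if m < 0 then 0 else phi a b m.toNat

/-- Generalized Schur polynomial `S_λ(y₁,…,y_m|a,b)
  = det(φ_{λ_j+m-j}(y_i)) / ∏_{i<j}(y_i - y_j)` (indices here 0-based). -/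
def genS (a b : ℤ → K) (c : K →+* L) {m : ℕ} (y : Fin m → L) (lam : Fin m → ℕ) : L :=
  Matrix.det (Matrix.of fun i j : Fin m =>
      (phi a b (lam j + (m - 1 - (j : ℕ)))).eval₂ c (y i)) /
    ∏ i : Fin m, ∏ j ∈ Finset.Ioi i, (y i - y j)

/-- `h_i = S_{(i)}` for `i ≥ 0`, and `h_i = 0` for `i < 0`. -/
def genh (a b : ℤ → K) (c : K →+* L) {m : ℕ} (y : Fin m → L) (i : ℤ) : L :=
  if i < 0 then 0 else genS a b c y (fun j => if (j : ℕ) = 0 then i.toNat else 0)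

/-- `h_i^{(0)} = h_i`, `h_i^{(r+1)} = h_{i+1}^{(r)} + a(i+m-1)h_i^{(r)} + b(i+m-1)h_{i-1}^{(r)}`. -/
def genhr (a b : ℤ → K) (c : K →+* L) {m : ℕ} (y : Fin m → L) : ℕ → ℤ → L
  | 0, i => genh a b c y i
  | (r+1), i => genhr a b c y r (i+1) + c (a (i + m - 1)) * genhr a b c y r i
      + c (b (i + m - 1)) * genhr a b c y r (i-1)

/-- The field `F = K(x₁,…,x_n)`. -/
abbrev Fn (K : Type*) [Field K] (n : ℕ) := FractionRing (MvPolynomial (Fin n) K)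

/-- The embedding `K → K(x₁,…,x_n)`. -/
def cK (K : Type*) [Field K] (n : ℕ) : K →+* Fn K n :=
  (algebraMap (MvPolynomial (Fin n) K) (Fn K n)).comp MvPolynomial.C

/-- The variables `x₁,…,x_n` as elements of `K(x₁,…,x_n)`. -/
def xv (K : Type*) [Field K] (n : ℕ) (i : Fin n) : Fn K n :=
  algebraMap (MvPolynomial (Fin n) K) (Fn K n) (MvPolynomial.X i)

/-!
Expressing the determinant through Cramer's rule shows that `h_i(y₁, …, y_m)` is the divided
difference of `φ_{i+m-1}` at `y₁, …, y_m`; with `φ_k = 0` for `k < 0` this holds for every integer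
`i`. For `i ≥ -1` the three-term recurrence then turns `h_i^{(1)} - y₁ h_i` into the divided
difference of `(z - y₁) φ_{i+m-1}(z)`, while for `i < -1` everything vanishes. The factor `z - y₁`
cancels the node `y₁`, which leaves the divided difference of `φ_{i+m-1}` at `y₂, …, y_m`, that is
`h_{i+1}(y₂, …, y_m)`. The recursion for `h^{(r)}` is linear, and at index `i + 1` with one variable
fewer it has the same coefficients as at index `i`, so the case of general `r` follows by induction.
-/

theorem det_updateCol_of_vecMul_eq_single {R ι : Type*} [CommRing R] [Fintype ι] [DecidableEq ι]
    {A : Matrix ι ι R} {w : ι → R} {j : ι} (h : w ᵥ* A = Pi.single j 1) (f : ι → R) :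
    (A.updateCol j f).det = A.det * (w ⬝ᵥ f) :=
  calc (A.updateCol j f).det = Pi.single j 1 ⬝ᵥ A.cramer f := by
        rw [single_one_dotProduct, cramer_apply]
    _ = w ⬝ᵥ A *ᵥ A.cramer f := by rw [← h, dotProduct_mulVec]
    _ = A.det * (w ⬝ᵥ f) := by rw [mulVec_cramer, dotProduct_smul, smul_eq_mul]

theorem det_eval_eq_prod_sub {R : Type*} [CommRing R] {n : ℕ} {p : Fin n → R[X]}
    (hp : ∀ j, IsMonicOfDegree (p j) j.rev) (y : Fin n → R) :
    (Matrix.of fun i j => (p j).eval (y i)).det = ∏ i, ∏ j ∈ Ioi i, (y i - y j) := by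
  have hrev (j : Fin n) : IsMonicOfDegree (p j.rev) j := by simpa using hp j.rev
  calc (Matrix.of fun i j => (p j).eval (y i)).det
      = ((Matrix.of fun i j : Fin n => (p j.rev).eval (y i)).submatrix id Fin.revPerm).det := by
        congr 1
        ext i j
        simp
    _ = ((vandermonde y).submatrix id Fin.revPerm).det := by
        rw [det_permute', det_permute', det_eval_matrixOfPolynomials_eq_det_vandermonde y _
          (fun j => (hrev j).natDegree_eq) (fun j => (hrev j).monic)]
    _ = (projVandermonde 1 y).det := by
        congr 1
        ext i j
        simp [projVandermonde_apply]
    _ = ∏ i, ∏ j ∈ Ioi i, (y i - y j) := by simp [det_projVandermonde]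

section DividedDifference

variable {F ι : Type*} [Field F] [DecidableEq ι] {s : Finset ι} {v : ι → F}

/-- The divided difference of a polynomial at the nodes `v i`, `i ∈ s`, that is
`∑ i ∈ s, P (v i) / ∏ j ∈ s \ {i}, (v i - v j)`, as a linear functional of `P`. The nodes are
meant to be distinct. -/
def dividedDifference (s : Finset ι) (v : ι → F) : F[X] →ₗ[F] F :=
  ∑ i ∈ s, Lagrange.nodalWeight s v i • leval (v i)

theorem dividedDifference_apply (s : Finset ι) (v : ι → F) (P : F[X]) :
    dividedDifference s v P = ∑ i ∈ s, Lagrange.nodalWeight s v i * P.eval (v i) := by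
  simp [dividedDifference]

theorem dividedDifference_eq_coeff (hv : Set.InjOn v s) {n : ℕ} (hs : #s = n + 1) {P : F[X]}
    (hP : P.natDegree ≤ n) : dividedDifference s v P = P.coeff n := by
  have hdeg : P.degree < #s :=
    degree_le_natDegree.trans_lt (Nat.cast_lt.mpr (by omega))
  have hcoeff := Lagrange.coeff_eq_sum hv hdeg
  rw [hs, Nat.add_sub_cancel] at hcoeff
  rw [dividedDifference_apply, hcoeff]
  refine sum_congr rfl fun i _ => ?_
  rw [Lagrange.nodalWeight, prod_inv_distrib, div_eq_inv_mul]

theorem dividedDifference_map {κ : Type*} [DecidableEq κ] (s : Finset κ) (e : κ ↪ ι) (v : ι → F) :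
    dividedDifference (s.map e) v = dividedDifference s (v ∘ e) := by
  simp [dividedDifference, Lagrange.nodalWeight, ← map_erase]

theorem sub_mul_nodalWeight (hv : Set.InjOn v s) {i j : ι} (hi : i ∈ s.erase j) (hj : j ∈ s) :
    (v i - v j) * Lagrange.nodalWeight s v i = Lagrange.nodalWeight (s.erase j) v i := by
  obtain ⟨hij, his⟩ := mem_erase.mp hi
  have hne : v i - v j ≠ 0 := sub_ne_zero.mpr (hv.ne his hj hij)
  rw [Lagrange.nodalWeight, Lagrange.nodalWeight, erase_right_comm,
    ← mul_prod_erase _ _ (mem_erase.mpr ⟨hij.symm, hj⟩), mul_inv_cancel_left₀ hne]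

theorem dividedDifference_X_sub_C_mul (hv : Set.InjOn v s) {j : ι} (hj : j ∈ s) (P : F[X]) :
    dividedDifference s v ((X - C (v j)) * P) = dividedDifference (s.erase j) v P := by
  rw [dividedDifference_apply, dividedDifference_apply, ← add_sum_erase s _ hj]
  simp only [eval_mul, eval_sub, eval_X, eval_C, sub_self, zero_mul, mul_zero, zero_add]
  refine sum_congr rfl fun i hi => ?_
  rw [← sub_mul_nodalWeight hv hi hj]
  ring

theorem dividedDifference_tail {m : ℕ} {y : Fin (m + 1) → F} (hy : Function.Injective y)
    (P : F[X]) :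
    dividedDifference univ (Fin.tail y) P = dividedDifference univ y ((X - C (y 0)) * P) := by
  have htail : (univ : Finset (Fin (m + 1))).erase 0 = univ.map (Fin.succEmb m) := by
    rw [Fin.univ_succ, erase_cons]
    rfl
  rw [dividedDifference_X_sub_C_mul hy.injOn (mem_univ 0), htail, dividedDifference_map]
  rfl

-- Pairing the nodal weights with the column of `p j` gives the coefficient of degree `m` of `p j`,
-- so the weights are the first row of the inverse matrix and Cramer's rule applies.
theorem det_updateCol_zero_eval {m : ℕ} {p : Fin (m + 1) → F[X]}
    (hp : ∀ j, IsMonicOfDegree (p j) j.rev) {y : Fin (m + 1) → F} (hy : Function.Injective y)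
    (P : F[X]) :
    ((Matrix.of fun i j => (p j).eval (y i)).updateCol 0 fun i => P.eval (y i)).det
      = (∏ i, ∏ j ∈ Ioi i, (y i - y j)) * dividedDifference univ y P := by
  have hweights : Lagrange.nodalWeight univ y ᵥ* Matrix.of (fun i j => (p j).eval (y i))
      = Pi.single 0 1 := by
    ext j
    calc (Lagrange.nodalWeight univ y ᵥ* Matrix.of fun i j => (p j).eval (y i)) j
        = dividedDifference univ y (p j) := (dividedDifference_apply univ y (p j)).symm
      _ = (p j).coeff m :=
        dividedDifference_eq_coeff hy.injOn (card_fin _) ((hp j).natDegree_eq.trans_le j.rev.is_le)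
      _ = Pi.single (M := fun _ => F) 0 1 j := by
        rcases eq_or_ne j 0 with rfl | hj
        · simpa [(hp 0).natDegree_eq] using (hp 0).monic.coeff_natDegree
        · rw [Pi.single_eq_of_ne hj, coeff_eq_zero_of_natDegree_lt]
          rw [(hp j).natDegree_eq, Fin.val_rev]
          have := Fin.pos_iff_ne_zero.mpr hj
          omega
  rw [det_updateCol_of_vecMul_eq_single hweights, det_eval_eq_prod_sub hp,
    dividedDifference_apply, dotProduct]

end DividedDifference

theorem isMonicOfDegree_phi (a b : ℤ → K) : ∀ k, IsMonicOfDegree (phi a b k) k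
  | 0 => isMonicOfDegree_zero_iff.mpr rfl
  | 1 => isMonicOfDegree_X_sub_one _
  | k + 2 => by
    have hlead : IsMonicOfDegree ((X - C (a (k + 1))) * phi a b (k + 1)) (k + 2) := by
      rw [show k + 2 = 1 + (k + 1) by omega]
      exact (isMonicOfDegree_X_sub_one _).mul (isMonicOfDegree_phi a b (k + 1))
    refine hlead.sub ((natDegree_C_mul_le _ _).trans_lt ?_)
    rw [(isMonicOfDegree_phi a b k).natDegree_eq]
    omega

theorem phiZ_natCast (a b : ℤ → K) (k : ℕ) : phiZ a b k = phi a b k := by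
  simp [phiZ]

theorem phiZ_of_neg (a b : ℤ → K) {k : ℤ} (hk : k < 0) : phiZ a b k = 0 :=
  if_pos hk

theorem phiZ_add_one (a b : ℤ → K) {k : ℤ} (hk : 0 ≤ k) :
    phiZ a b (k + 1) = (X - C (a k)) * phiZ a b k - C (b k) * phiZ a b (k - 1) := by
  lift k to ℕ using hk
  cases k with
  | zero => simp [phiZ, phi]
  | succ k =>
    rw [← Nat.cast_succ, phiZ_natCast, phiZ_natCast, Nat.cast_succ, add_sub_cancel_right,
      phiZ_natCast, phi]

theorem X_mul_map_phiZ (a b : ℤ → K) (c : K →+* L) {k : ℤ} (hk : 0 ≤ k) :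
    X * (phiZ a b k).map c
      = (phiZ a b (k + 1)).map c + c (a k) • (phiZ a b k).map c
        + c (b k) • (phiZ a b (k - 1)).map c := by
  rw [phiZ_add_one a b hk]
  simp only [Polynomial.map_sub, Polynomial.map_mul, map_X, map_C, smul_eq_C_mul]
  ring

theorem degree_phiZ_lt (a b : ℤ → K) {k : ℤ} {m : ℕ} (hk : k < m) : (phiZ a b k).degree < m := by
  rcases lt_or_ge k 0 with hneg | hnonneg
  · simp [phiZ_of_neg a b hneg]
  · lift k to ℕ using hnonneg
    have hphi := isMonicOfDegree_phi a b k
    rw [phiZ_natCast, degree_eq_natDegree hphi.ne_zero, hphi.natDegree_eq]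
    exact_mod_cast hk

theorem genh_of_neg (a b : ℤ → K) (c : K →+* L) {m : ℕ} (y : Fin m → L) {i : ℤ} (hi : i < 0) :
    genh a b c y i = 0 :=
  if_pos hi

theorem genS_row_eq_dividedDifference (a b : ℤ → K) (c : K →+* L) {m : ℕ} {y : Fin (m + 1) → L}
    (hy : Function.Injective y) (k : ℕ) :
    genS a b c y (fun j => if (j : ℕ) = 0 then k else 0)
      = dividedDifference univ y ((phi a b (k + m)).map c) := by
  have hp (j : Fin (m + 1)) : IsMonicOfDegree ((phi a b j.rev).map c) j.rev :=
    ⟨(natDegree_map c).trans (isMonicOfDegree_phi a b _).natDegree_eq,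
      (isMonicOfDegree_phi a b _).monic.map c⟩
  have hmatrix : (Matrix.of fun i j : Fin (m + 1) =>
        (phi a b ((if (j : ℕ) = 0 then k else 0) + (m + 1 - 1 - j))).eval₂ c (y i))
      = (Matrix.of fun i j : Fin (m + 1) => ((phi a b j.rev).map c).eval (y i)).updateCol 0
          fun i => ((phi a b (k + m)).map c).eval (y i) := by
    ext i j
    rcases eq_or_ne j 0 with rfl | hj
    · simp [eval_map]
    · simp [eval_map, hj, Fin.val_rev]
  have hdet : ∏ i, ∏ j ∈ Ioi i, (y i - y j) ≠ 0 :=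
    prod_ne_zero_iff.mpr fun i _ => prod_ne_zero_iff.mpr fun j hj =>
      sub_ne_zero.mpr (hy.ne (mem_Ioi.mp hj).ne)
  rw [genS, hmatrix, det_updateCol_zero_eval hp hy, mul_div_cancel_left₀ _ hdet]

theorem genh_eq_dividedDifference (a b : ℤ → K) (c : K →+* L) {m : ℕ} {y : Fin (m + 1) → L}
    (hy : Function.Injective y) (i : ℤ) :
    genh a b c y i = dividedDifference univ y ((phiZ a b (i + m)).map c) := by
  rcases lt_or_ge i 0 with hi | hi
  · have hdeg : ((phiZ a b (i + m)).map c).degree < m := by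
      rw [degree_map]
      exact degree_phiZ_lt a b (by omega)
    rw [genh_of_neg a b c y hi, dividedDifference_eq_coeff hy.injOn (card_fin _)
      (natDegree_le_of_degree_le hdeg.le), coeff_eq_zero_of_degree_lt hdeg]
  · lift i to ℕ using hi
    rw [genh, if_neg (by omega), Int.toNat_natCast, genS_row_eq_dividedDifference a b c hy,
      ← Nat.cast_add, phiZ_natCast]

theorem genhr_succ (a b : ℤ → K) (c : K →+* L) {m : ℕ} (y : Fin m → L) (r : ℕ) (i : ℤ) :
    genhr a b c y (r + 1) i
      = genhr a b c y r (i + 1) + c (a (i + m - 1)) * genhr a b c y r i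
        + c (b (i + m - 1)) * genhr a b c y r (i - 1) :=
  rfl

theorem genhr_one_sub_mul_genh (a b : ℤ → K) (c : K →+* L) {m : ℕ} {y : Fin (m + 2) → L}
    (hy : Function.Injective y) (i : ℤ) :
    genhr a b c y 1 i - y 0 * genh a b c y i = genh a b c (Fin.tail y) (i + 1) := by
  have hone : genhr a b c y 1 i = genh a b c y (i + 1) + c (a (i + m + 1)) * genh a b c y i
      + c (b (i + m + 1)) * genh a b c y (i - 1) := by
    rw [show i + m + 1 = i + ((m + 2 : ℕ) : ℤ) - 1 by push_cast; ring]
    exact genhr_succ a b c y 0 i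
  rcases lt_or_ge (i + 1) 0 with hi | hi
  · simp [hone, genh_of_neg a b c _ hi, genh_of_neg a b c y (show i < 0 by omega),
      genh_of_neg a b c y (show i - 1 < 0 by omega)]
  · have htail : Function.Injective (Fin.tail y) := hy.comp (Fin.succ_injective _)
    have hprev : i - 1 + ((m + 1 : ℕ) : ℤ) = i + m + 1 - 1 := by push_cast; ring
    have hcur : i + ((m + 1 : ℕ) : ℤ) = i + m + 1 := by push_cast; ring
    have hnext : i + 1 + ((m + 1 : ℕ) : ℤ) = i + m + 1 + 1 := by push_cast; ring
    rw [hone, genh_eq_dividedDifference a b c htail, dividedDifference_tail hy, add_right_comm i 1,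
      sub_mul, X_mul_map_phiZ a b c (by omega), ← smul_eq_C_mul]
    simp only [genh_eq_dividedDifference a b c hy, hprev, hcur, hnext, map_add, map_sub, map_smul,
      smul_eq_mul]

theorem genhr_shift_lemma_general (a b : ℤ → K) (c : K →+* L) {m : ℕ} {y : Fin (m + 2) → L}
    (hy : Function.Injective y) (r : ℕ) (i : ℤ) :
    genhr a b c y (r + 1) i - y 0 * genhr a b c y r i
      = genhr a b c (Fin.tail y) r (i + 1) := by
  induction r generalizing i with
  | zero => exact genhr_one_sub_mul_genh a b c hy i
  | succ r ih =>
    have hindex : i + 1 + ((m + 1 : ℕ) : ℤ) - 1 = i + ((m + 2 : ℕ) : ℤ) - 1 := by push_cast; ring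
    have hprev := ih (i - 1)
    rw [sub_add_cancel] at hprev
    rw [genhr_succ a b c (Fin.tail y), hindex, add_sub_cancel_right, ← ih (i + 1), ← ih i, ← hprev,
      genhr_succ a b c y (r + 1), genhr_succ a b c y r i]
    ring

theorem xv_injective (K : Type*) [Field K] (n : ℕ) : Function.Injective (xv K n) :=
  (IsFractionRing.injective (MvPolynomial (Fin n) K) (Fn K n)).comp MvPolynomial.X_injective

/-- **The key Lemma.** For `1 ≤ r ≤ i + 2n - 2`,
`h_i^{(r)}(x_1,…,x_n) - x_1·h_i^{(r-1)}(x_1,…,x_n) = h_{i+1}^{(r-1)}(x_2,…,x_n)`,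
where the right-hand side is built from the `n-1` variables `x_2,…,x_n`. -/
theorem genhr_shift_lemma (K : Type*) [Field K] (a b : ℤ → K) (n : ℕ) (hn : 2 ≤ n)
    (i : ℤ) (r : ℕ) (hr1 : 1 ≤ r) (hr2 : (r : ℤ) ≤ i + 2 * n - 2) :
    genhr a b (cK K n) (xv K n) r i
        - xv K n ⟨0, by omega⟩ * genhr a b (cK K n) (xv K n) (r - 1) i
      = genhr a b (cK K n)
          (fun j : Fin (n - 1) => xv K n ⟨(j : ℕ) + 1, by have := j.2; omega⟩)
          (r - 1) (i + 1) := by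
  obtain ⟨m, rfl⟩ := Nat.exists_eq_add_of_le' hn
  obtain ⟨s, rfl⟩ := Nat.exists_eq_add_of_le' hr1
  exact genhr_shift_lemma_general a b (cK K (m + 2)) (xv_injective K (m + 2)) s i
end
end

section
/- Classical Jacobi–Trudy formula: for every partition λ of length l ≤ n, the following identity holds in ℤ[x_1,…,x_n]: det( x_i^{λ_j + n − j} )_{1 ≤ i,j ≤ n} = ( ∏_{i<j} (x_i − x_j) ) · det( h_{λ_i − i + j} )_{1 ≤ i,j ≤ l}, where h_k = h_k(x_1,…,x_n) is the complete homogeneous symmetric polynomial of degree k in x_1,…,x_n for k ≥ 0, and h_k = 0 for k < 0. -/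
/-- Complete homogeneous symmetric polynomial with integer index: `0` for negative index. -/
noncomputable def hZ (n : ℕ) (k : ℤ) : MvPolynomial (Fin n) ℤ :=
  if k < 0 then 0 else MvPolynomial.hsymm (Fin n) ℤ k.toNat

/-!
Write `H(t) = ∑ hₘ tᵐ = ∏ⱼ (1 - xⱼ t)⁻¹`. Multiplying `H` by the polynomial `∏_{j ≠ i} (1 - xⱼ t)`,
whose degree is less than `n`, leaves the geometric series `(1 - xᵢ t)⁻¹`, so every power `xᵢᵐ` is
a combination of `hₘ, …, hₘ₋ₙ₊₁` with coefficients that do not depend on `m`. Hence the alternant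
of `μ` factors as `E * (h_{μᵢ - i + j})ᵀ` with `E` independent of `μ`. For `μ = 0` the second factor
is unitriangular, so `det E` is the Vandermonde product. If `μ` vanishes from index `l` on, then the
corresponding rows of `h_{μᵢ - i + j}` are unitriangular, so its determinant is its leading minor of
size `l`.
-/

open Finset

section Determinant

/-- The alternant matrix `x_i ^ (μ_j + n - 1 - j)`, with `j` counted from `0`. -/
def alternant {A : Type*} [Monoid A] {n : ℕ} (x : Fin n → A) (μ : Fin n → ℕ) :
    Matrix (Fin n) (Fin n) A :=
  Matrix.of fun i j => x i ^ (μ j + (n - 1 - (j : ℕ)))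

variable {A : Type*} [CommRing A] {n : ℕ}

theorem det_alternant_zero (x : Fin n → A) :
    (alternant x 0).det = ∏ i, ∏ j ∈ Ioi i, (x i - x j) := by
  have hvandermonde : alternant x 0 = Matrix.projVandermonde 1 x := by
    ext i j
    simp [alternant, Matrix.projVandermonde_apply, Fin.val_rev, Nat.sub_sub, Nat.add_comm]
  simp [hvandermonde, Matrix.det_projVandermonde]

theorem det_eq_det_submatrix_castLE {l : ℕ} (hl : l ≤ n) {M : Matrix (Fin n) (Fin n) A}
    (hlower : ∀ i j : Fin n, l ≤ (i : ℕ) → j < i → M i j = 0)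
    (hdiag : ∀ i : Fin n, l ≤ (i : ℕ) → M i i = 1) :
    M.det = (M.submatrix (Fin.castLE hl) (Fin.castLE hl)).det := by
  have hcorner : (M.toSquareBlockProp fun i : Fin n => ¬(i : ℕ) < l).det = 1 := by
    rw [Matrix.det_of_isUpperTriangular]
    · exact prod_eq_one fun i _ => hdiag i (not_lt.1 i.2)
    · exact fun i j hji => hlower i j (not_lt.1 i.2) hji
  rw [M.twoBlockTriangular_det (fun i => (i : ℕ) < l)
    fun i hi j hj => hlower i j (not_lt.1 hi) (hj.trans_le (not_lt.1 hi)), hcorner, mul_one,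
    ← Matrix.det_submatrix_equiv_self (Fin.castLEquiv hl)]
  rfl

end Determinant

section GeneratingFunction

theorem one_sub_C_mul_X_mul_mk_pow {A : Type*} [Ring A] (a : A) :
    (1 - PowerSeries.C a * PowerSeries.X) * PowerSeries.mk (fun k => a ^ k) = 1 := by
  ext k
  cases k <;>
    simp [sub_mul, mul_assoc, PowerSeries.coeff_succ_X_mul, PowerSeries.coeff_one, pow_succ']

variable (σ R : Type*) [Fintype σ] [DecidableEq σ]

theorem mk_hsymm_eq_prod [CommSemiring R] :
    PowerSeries.mk (MvPolynomial.hsymm σ R) =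
      ∏ i : σ, PowerSeries.mk fun k => (MvPolynomial.X i : MvPolynomial σ R) ^ k := by
  ext1 d
  simp only [PowerSeries.coeff_prod, PowerSeries.coeff_mk, MvPolynomial.hsymm]
  refine sum_bij (fun s _ => Multiset.toFinsupp s.1) (fun s _ => ?_) (fun s _ t _ h => ?_)
    (fun f hf => ?_) (fun s _ => ?_)
  · exact mem_finsuppAntidiag.2
      ⟨(Multiset.sum_count_eq_card fun i _ => mem_univ i).trans s.2, subset_univ _⟩
  · exact Subtype.ext (Multiset.toFinsupp.injective h)
  · have hcard : (Finsupp.toMultiset f).card = d := by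
      rw [Finsupp.card_toMultiset, Finsupp.sum_fintype _ _ fun _ => rfl]
      exact (mem_finsuppAntidiag.1 hf).1
    exact ⟨⟨Finsupp.toMultiset f, hcard⟩, mem_univ _, Finsupp.toMultiset_toFinsupp f⟩
  · rw [prod_multiset_map_count]
    refine prod_subset (subset_univ _) fun i _ hi => ?_
    rw [Multiset.count_eq_zero.2 (mt Multiset.mem_toFinset.2 hi), pow_zero]

/-- The complete homogeneous symmetric polynomial of integer degree `k`; it is `0` for `k < 0`. -/
noncomputable def hsymmInt [CommSemiring R] (k : ℤ) : MvPolynomial σ R :=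
  if k < 0 then 0 else MvPolynomial.hsymm σ R k.toNat

variable {σ R}

theorem hsymmInt_of_neg [CommSemiring R] {k : ℤ} (hk : k < 0) : hsymmInt σ R k = 0 :=
  if_pos hk

theorem hsymmInt_natCast [CommSemiring R] (k : ℕ) :
    hsymmInt σ R k = MvPolynomial.hsymm σ R k := by
  simp [hsymmInt]

theorem coeff_X_pow_mul_mk_hsymm [CommSemiring R] (m k : ℕ) :
    PowerSeries.coeff m (PowerSeries.X ^ k * PowerSeries.mk (MvPolynomial.hsymm σ R)) =
      hsymmInt σ R (m - k) := by
  rw [PowerSeries.coeff_X_pow_mul', PowerSeries.coeff_mk]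
  split_ifs with hkm
  · rw [← Nat.cast_sub hkm, hsymmInt_natCast]
  · rw [hsymmInt_of_neg (by omega)]

theorem coeff_coe_mul_mk_hsymm [CommSemiring R] {p : Polynomial (MvPolynomial σ R)} {N : ℕ}
    (hp : p.natDegree < N) (m : ℕ) :
    PowerSeries.coeff m
        ((p : PowerSeries (MvPolynomial σ R)) * PowerSeries.mk (MvPolynomial.hsymm σ R)) =
      ∑ k ∈ range N, p.coeff k * hsymmInt σ R (m - k) := by
  have hcoe : (p : PowerSeries (MvPolynomial σ R)) =
      ∑ k ∈ range N, PowerSeries.C (p.coeff k) * PowerSeries.X ^ k := by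
    conv_lhs => rw [p.as_sum_range' N hp, ← Polynomial.coeToPowerSeries.ringHom_apply, map_sum]
    simp [← Polynomial.C_mul_X_pow_eq_monomial]
  simp only [hcoe, sum_mul, map_sum, mul_assoc, PowerSeries.coeff_C_mul,
    coeff_X_pow_mul_mk_hsymm]

variable [CommRing R]

variable (R) in
/-- The polynomial `∏_{j ≠ i} (1 - x_j t)` in `t`, whose coefficients are, up to sign, the
elementary symmetric polynomials in the variables other than `x_i`. -/
noncomputable def esymmEraseGen (i : σ) : Polynomial (MvPolynomial σ R) :=
  ∏ j ∈ univ.erase i, (1 - Polynomial.C (MvPolynomial.X j) * Polynomial.X)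

theorem natDegree_esymmEraseGen_lt (i : σ) :
    (esymmEraseGen R i).natDegree < Fintype.card σ := by
  have hle : (esymmEraseGen R i).natDegree ≤ ∑ _j ∈ univ.erase i, 1 :=
    (Polynomial.natDegree_prod_le _ _).trans (sum_le_sum fun j _ => by compute_degree)
  rw [sum_const, smul_eq_mul, mul_one] at hle
  exact hle.trans_lt (card_erase_lt_of_mem (mem_univ i))

theorem esymmEraseGen_mul_mk_hsymm (i : σ) :
    (esymmEraseGen R i : PowerSeries (MvPolynomial σ R)) *
        PowerSeries.mk (MvPolynomial.hsymm σ R) =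
      PowerSeries.mk fun k => MvPolynomial.X i ^ k := by
  have hcoe : (esymmEraseGen R i : PowerSeries (MvPolynomial σ R)) =
      ∏ j ∈ univ.erase i, (1 - PowerSeries.C (MvPolynomial.X j) * PowerSeries.X) := by
    rw [esymmEraseGen, ← Polynomial.coeToPowerSeries.ringHom_apply, map_prod]
    simp
  rw [hcoe, mk_hsymm_eq_prod, ← mul_prod_erase _ _ (mem_univ i), mul_left_comm,
    ← prod_mul_distrib]
  simp only [one_sub_C_mul_X_mul_mk_pow, prod_const_one, mul_one]

theorem X_pow_eq_sum_coeff_esymmEraseGen_mul_hsymmInt (i : σ) (m : ℕ) :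
    (MvPolynomial.X i : MvPolynomial σ R) ^ m =
      ∑ k ∈ range (Fintype.card σ), (esymmEraseGen R i).coeff k * hsymmInt σ R (m - k) := by
  rw [← coeff_coe_mul_mk_hsymm (natDegree_esymmEraseGen_lt i), esymmEraseGen_mul_mk_hsymm,
    PowerSeries.coeff_mk]

end GeneratingFunction

section JacobiTrudy

/-- The Jacobi–Trudy matrix `h_{μ_i - i + j}` of a finite sequence `μ`, whose length need not be the
number of variables. -/
noncomputable def jacobiTrudyMatrix (σ R : Type*) [Fintype σ] [DecidableEq σ] [CommSemiring R]
    {n : ℕ} (μ : Fin n → ℕ) : Matrix (Fin n) (Fin n) (MvPolynomial σ R) :=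
  Matrix.of fun i j => hsymmInt σ R ((μ i : ℤ) - (i : ℕ) + (j : ℕ))

variable (R : Type*) [CommRing R] {n : ℕ}

theorem det_jacobiTrudyMatrix_comp_castLE (σ : Type*) [Fintype σ] [DecidableEq σ] {l : ℕ}
    (hl : l ≤ n) {μ : Fin n → ℕ} (hzero : ∀ i : Fin n, l ≤ (i : ℕ) → μ i = 0) :
    (jacobiTrudyMatrix σ R (μ ∘ Fin.castLE hl)).det = (jacobiTrudyMatrix σ R μ).det := by
  symm
  apply det_eq_det_submatrix_castLE hl
  · intro i j hi hji
    exact hsymmInt_of_neg (by rw [hzero i hi]; omega)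
  · intro i hi
    simp [jacobiTrudyMatrix, hzero i hi, hsymmInt]

theorem det_jacobiTrudyMatrix_zero (σ : Type*) [Fintype σ] [DecidableEq σ] :
    (jacobiTrudyMatrix σ R (0 : Fin n → ℕ)).det = 1 := by
  rw [← det_jacobiTrudyMatrix_comp_castLE R σ n.zero_le (μ := 0) fun _ _ => rfl,
    Matrix.det_fin_zero]

variable (n) in
/-- The matrix of the coefficients of the polynomials `∏_{j ≠ i} (1 - x_j t)`, with the columns in
order of decreasing degree, so that it carries Jacobi–Trudy matrices to alternants. -/
noncomputable def esymmEraseMatrix : Matrix (Fin n) (Fin n) (MvPolynomial (Fin n) R) :=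
  Matrix.of fun i k => (esymmEraseGen R i).coeff k.rev

theorem alternant_X_eq_mul (μ : Fin n → ℕ) :
    alternant MvPolynomial.X μ =
      esymmEraseMatrix R n * (jacobiTrudyMatrix (Fin n) R μ).transpose := by
  ext1 i j
  simp only [alternant, esymmEraseMatrix, jacobiTrudyMatrix, Matrix.mul_apply, Matrix.of_apply,
    Matrix.transpose_apply]
  rw [X_pow_eq_sum_coeff_esymmEraseGen_mul_hsymmInt, Fintype.card_fin, sum_range,
    ← Equiv.sum_comp Fin.revPerm]
  refine sum_congr rfl fun k _ => ?_
  have hindex : ((μ j + (n - 1 - (j : ℕ)) : ℕ) : ℤ) - (k.rev : ℕ) =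
      (μ j : ℤ) - (j : ℕ) + (k : ℕ) := by
    rw [Fin.val_rev]
    omega
  rw [Fin.revPerm_apply, hindex]

theorem det_esymmEraseMatrix :
    (esymmEraseMatrix R n).det =
      ∏ i, ∏ j ∈ Ioi i, (MvPolynomial.X i - MvPolynomial.X j) := by
  rw [← det_alternant_zero, alternant_X_eq_mul, Matrix.det_mul, Matrix.det_transpose,
    det_jacobiTrudyMatrix_zero, mul_one]

theorem classical_jacobi_trudy_general {l : ℕ} (hl : l ≤ n) {μ : Fin n → ℕ}
    (hzero : ∀ i : Fin n, l ≤ (i : ℕ) → μ i = 0) :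
    (alternant (MvPolynomial.X : Fin n → MvPolynomial (Fin n) R) μ).det =
      (∏ i, ∏ j ∈ Ioi i, (MvPolynomial.X i - MvPolynomial.X j)) *
        (jacobiTrudyMatrix (Fin n) R (μ ∘ Fin.castLE hl)).det := by
  rw [alternant_X_eq_mul, Matrix.det_mul, Matrix.det_transpose, det_esymmEraseMatrix,
    det_jacobiTrudyMatrix_comp_castLE R (Fin n) hl hzero]

end JacobiTrudy

/-- **Classical Jacobi–Trudy formula.** For a partition `λ` of length `l ≤ n`,
`det(x_i^{λ_j+n-j}) = ∏_{i<j}(x_i - x_j) · det(h_{λ_i-i+j})_{1≤i,j≤l}`. -/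
theorem classical_jacobi_trudy (n l : ℕ) (hl : l ≤ n) (lam : Fin n → ℕ)
    (hanti : Antitone lam) (hpos : ∀ i : Fin n, (i : ℕ) < l → 0 < lam i)
    (hzero : ∀ i : Fin n, l ≤ (i : ℕ) → lam i = 0) :
    Matrix.det (Matrix.of fun i j : Fin n =>
        (MvPolynomial.X i : MvPolynomial (Fin n) ℤ) ^ (lam j + (n - 1 - (j : ℕ)))) =
      (∏ i : Fin n, ∏ j ∈ Finset.Ioi i, (MvPolynomial.X i - MvPolynomial.X j)) *
        Matrix.det (Matrix.of fun i j : Fin l =>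
          hZ n ((lam (Fin.castLE hl i) : ℤ) - (i : ℕ) + (j : ℕ))) :=
  classical_jacobi_trudy_general ℤ hl hzero
end
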